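/- Let (X,d) be a metric space, f : X → X a map, x ∈ X, ℓ ∈ ℕ and ε > 0. Assume the limits C_1(x,∞,ε), C_ℓ(x,∞,ε) and C_{ℓ+1}(x,∞,ε) exist. Then RR_ℓ(x,∞,ε) and P≥_ℓ(x,∞,ε) exist and RR_ℓ(x,∞,ε) = ℓ·C_ℓ(x,∞,ε) − (ℓ−1)·C_{ℓ+1}(x,∞,ε); DET_ℓ(x,∞,ε) = [ℓ·C_ℓ − (ℓ−1)·C_{ℓ+1}]/C_1 (provided C_1 > 0); if moreover C_ℓ(x,∞,ε) > 0 then L_ℓ(x,∞,ε) = ℓ + C_{ℓ+1}/(C_ℓ − C_{ℓ+1}) (with L_ℓ = ∞ if the denominator is zero); and C_ℓ(x,∞,ε) = RR_ℓ(x,∞,ε) − (ℓ−1)·P≥_ℓ(x,∞,ε). -/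

import Mathlib

open Filter Topology MeasureTheory

namespace RQA

/-- The standard metric on symbolic sequences over an alphabet `α`:
`ρ(x,y) = 2^{-min{i : x i ≠ y i}}` for `x ≠ y` and `ρ(x,x) = 0`. -/
noncomputable def seqDist {α : Type*} (x y : ℕ → α) : ℝ :=
  haveI := Classical.propDecidable (x = y)
  if x = y then 0 else (2 : ℝ) ^ (-((sInf {i : ℕ | x i ≠ y i} : ℕ) : ℤ))

/-- The (one-sided) shift on sequences. -/
def shift {α : Type*} (x : ℕ → α) : ℕ → α := fun i => x (i + 1)

/-- The embedded sequence `x^{(m)}`, a sequence over the alphabet `α^m`. -/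
def embedSeq {α : Type*} (m : ℕ) (x : ℕ → α) : ℕ → (Fin m → α) :=
  fun j t => x (j + (t : ℕ))

section RQAdefs

variable {X : Type*} (d : X → X → ℝ) (f : X → X) (x : X)

/-- The entry of the recurrence plot at `(i,j)` equals `1`. -/
def RPone (ε : ℝ) (i j : ℕ) : Prop := d (f^[i] x) (f^[j] x) ≤ ε

/-- `(i, j, l)` is a diagonal line in the recurrence plot `RP(x, n, ε)`. -/
def IsLine (n : ℕ) (ε : ℝ) (i j l : ℕ) : Prop :=
  1 ≤ l ∧ i + l ≤ n ∧ j + l ≤ n ∧ i ≠ j ∧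
  (∀ h, h < l → RPone d f x ε (i + h) (j + h)) ∧
  (0 < i → 0 < j → ¬ RPone d f x ε (i - 1) (j - 1)) ∧
  (max i j + l < n → ¬ RPone d f x ε (i + l) (j + l))

/-- `N_l(x, n, ε)`: the number of diagonal lines of length exactly `l`. -/
noncomputable def Nlines (n : ℕ) (ε : ℝ) (l : ℕ) : ℕ :=
  Set.ncard {p : ℕ × ℕ | IsLine d f x n ε p.1 p.2 l}

/-- `P_l(x, n, ε) = N_l/(n² − n)`. -/
noncomputable def Pline (n : ℕ) (ε : ℝ) (l : ℕ) : ℝ :=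
  (Nlines d f x n ε l : ℝ) / ((n : ℝ) ^ 2 - (n : ℝ))

/-- `P≥_ℓ(x, n, ε) = Σ_{l ≥ ℓ} P_l`. -/
noncomputable def PlineGe (n : ℕ) (ε : ℝ) (ℓ : ℕ) : ℝ :=
  ∑' k : ℕ, Pline d f x n ε (ℓ + k)

/-- The recurrence rate `RR_ℓ(x, n, ε) = Σ_{l ≥ ℓ} l · P_l`. -/
noncomputable def RRate (n : ℕ) (ε : ℝ) (ℓ : ℕ) : ℝ :=
  ∑' k : ℕ, ((ℓ + k : ℕ) : ℝ) * Pline d f x n ε (ℓ + k)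

/-- The determinism `DET_ℓ(x, n, ε) = RR_ℓ/RR_1`. -/
noncomputable def DETrm (n : ℕ) (ε : ℝ) (ℓ : ℕ) : ℝ :=
  RRate d f x n ε ℓ / RRate d f x n ε 1

/-- The average line length `L_ℓ(x, n, ε) = RR_ℓ/P≥_ℓ`. -/
noncomputable def LAvg (n : ℕ) (ε : ℝ) (ℓ : ℕ) : ℝ :=
  RRate d f x n ε ℓ / PlineGe d f x n ε ℓ

/-- The entropy of line lengths
`ENT_ℓ(x, n, ε) = log P≥_ℓ − (1/P≥_ℓ)·Σ_{l≥ℓ} P_l · log P_l` (with `0·log 0 = 0`). -/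
noncomputable def ENTln (n : ℕ) (ε : ℝ) (ℓ : ℕ) : ℝ :=
  Real.log (PlineGe d f x n ε ℓ) -
    (PlineGe d f x n ε ℓ)⁻¹ *
      ∑' k : ℕ, Pline d f x n ε (ℓ + k) * Real.log (Pline d f x n ε (ℓ + k))

/-- The correlation sum
`C_ℓ(x, n, ε) = n^{-2}·#{(i,j) ∈ [0,n)² : d_ℓ(f^i x, f^j x) ≤ ε}`,
where `d_ℓ` is the Bowen metric. -/
noncomputable def corrSum (ℓ n : ℕ) (ε : ℝ) : ℝ :=
  (Set.ncard {p : ℕ × ℕ | p.1 < n ∧ p.2 < n ∧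
      ∀ k, k < ℓ → d (f^[p.1 + k] x) (f^[p.2 + k] x) ≤ ε} : ℝ) / (n : ℝ) ^ 2

end RQAdefs

/-- The extension of a substitution to a morphism of the free monoid of finite words. -/
def substWord (ζ : Bool → List Bool) : List Bool → List Bool :=
  fun w => w.foldr (fun a r => ζ a ++ r) []

/-- `ζ` is a (binary) substitution of constant length `q ≥ 2`. -/
def IsConstLenSubst (ζ : Bool → List Bool) (q : ℕ) : Prop :=
  2 ≤ q ∧ ∀ a : Bool, (ζ a).length = q

/-- The language `L_ζ`: subwords of the words `ζ^k(a)`, `a ∈ A`, `k ≥ 1`. -/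
def substLang (ζ : Bool → List Bool) : Set (List Bool) :=
  {w | ∃ a : Bool, ∃ k : ℕ, 1 ≤ k ∧ w <:+: (substWord ζ)^[k] [a]}

/-- The substitution subshift `X_ζ`. -/
def SubstShift (ζ : Bool → List Bool) : Set (ℕ → Bool) :=
  {y | ∀ n : ℕ, (List.ofFn fun t : Fin n => y (t : ℕ)) ∈ substLang ζ}

/-- `ζ` is primitive. -/
def IsPrimitive (ζ : Bool → List Bool) : Prop :=
  ∃ k : ℕ, 1 ≤ k ∧ ∀ a b : Bool, b ∈ (substWord ζ)^[k] [a]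

/-- `ζ` is aperiodic: `X_ζ` contains a non-periodic sequence. -/
def IsAperiodic (ζ : Bool → List Bool) : Prop :=
  ∃ y ∈ SubstShift ζ, ∀ p : ℕ, 1 ≤ p → ∃ i : ℕ, y (i + p) ≠ y i

/-- The action of a constant length-`q` substitution on infinite sequences. -/
def substSeq (ζ : Bool → List Bool) (q : ℕ) (x : ℕ → Bool) : ℕ → Bool :=
  fun i => (ζ (x (i / q))).getD (i % q) false

/-- `(i, j, l)` is a line in the infinite symbolic recurrence plot `RP(x, ∞, ε₀)`. -/
def IsInfLine (x : ℕ → Bool) (i j l : ℕ) : Prop :=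
  1 ≤ l ∧ i ≠ j ∧ (∀ h, h < l → x (i + h) = x (j + h)) ∧
  (0 < i → 0 < j → x (i - 1) ≠ x (j - 1)) ∧ x (i + l) ≠ x (j + l)

/-- `K_l`: the set of starting points `(i,j)`, `i,j ≥ 1`, of inner lines of length `l`
in the infinite symbolic recurrence plot. -/
def Kset (x : ℕ → Bool) (l : ℕ) : Set (ℕ × ℕ) :=
  {p | 1 ≤ p.1 ∧ 1 ≤ p.2 ∧ IsInfLine x p.1 p.2 l}

/-- `#(M ∩ [0,n)²)/n²`. -/
noncomputable def densCount (M : Set (ℕ × ℕ)) (n : ℕ) : ℝ :=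
  (Set.ncard (M ∩ {p : ℕ × ℕ | p.1 < n ∧ p.2 < n}) : ℝ) / (n : ℝ) ^ 2

/-- `M ⊆ ℕ²` has asymptotic density `a`. -/
def HasDens (M : Set (ℕ × ℕ)) (a : ℝ) : Prop :=
  Tendsto (densCount M) atTop (𝓝 a)

/-- `δ_l(n) = #(K_l ∩ [1,n)²)/(n² − n)`. -/
noncomputable def deltaK (x : ℕ → Bool) (l n : ℕ) : ℝ :=
  (Set.ncard (Kset x l ∩ {p : ℕ × ℕ | p.1 < n ∧ p.2 < n}) : ℝ) / ((n : ℝ) ^ 2 - (n : ℝ))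

/-- `M` is a minimal subset of the subshift `Y`. -/
def IsMinimalSubset (Y M : Set (ℕ → Bool)) : Prop :=
  M ⊆ Y ∧ M.Nonempty ∧ IsClosed M ∧ (∀ z ∈ M, shift z ∈ M) ∧
  ∀ M' : Set (ℕ → Bool), M' ⊆ M → M'.Nonempty → IsClosed M' →
    (∀ z ∈ M', shift z ∈ M') → M' = M

end RQA

open RQA

/-!
Call a *window* of length `l` any run of `l` consecutive ones along a diagonal `i ≠ j` of the
plot, and let `W_l` be the number of windows. A window of length `l` either starts a line of length
at least `l` or is the diagonal shift of a window of length `l + 1`, so there are `W_l - W_{l+1}`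
lines of length at least `l`, and `N_l` is the second difference `W_l - 2 W_{l+1} + W_{l+2}`.
Summation by parts expresses `P≥_ℓ` and `RR_ℓ` through `W_ℓ` and `W_{ℓ+1}`. The pairs counted by
`C_l` that are not windows lie on the main diagonal or within `l` of the border of the plot; there
are `O(n)` of them, so `W_l / (n² - n)` and `C_l` have the same limit.
-/

namespace RQA

section Summation

theorem sum_range_affine_mul_secondDiff {A : Type*} [CommRing A] (a : ℕ → A) (b c : A) (m : ℕ) :
    ∑ k ∈ Finset.range m, (c + b * k) * (a k - 2 * a (k + 1) + a (k + 2)) =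
      c * (a 0 - a 1) + b * a 1 - ((c + b * m) * (a m - a (m + 1)) + b * a (m + 1)) := by
  induction m with
  | zero => simp
  | succ m ih =>
    rw [Finset.sum_range_succ, ih]
    push_cast
    ring

theorem hasSum_affine_mul_secondDiff {A : Type*} [CommRing A] [TopologicalSpace A]
    {a : ℕ → A} {m : ℕ} (ha : ∀ k, m ≤ k → a k = 0) (b c : A) :
    HasSum (fun k : ℕ => (c + b * k) * (a k - 2 * a (k + 1) + a (k + 2)))
      (c * (a 0 - a 1) + b * a 1) := by
  have partial_sum := sum_range_affine_mul_secondDiff a b c m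
  rw [ha m le_rfl, ha (m + 1) (by lia), sub_zero, mul_zero, mul_zero, add_zero, sub_zero]
    at partial_sum
  rw [← partial_sum]
  refine hasSum_sum_of_ne_finset_zero fun k hk => ?_
  have hmk : m ≤ k := by simpa using hk
  rw [ha k hmk, ha (k + 1) (by lia), ha (k + 2) (by lia)]
  ring

end Summation

section Windows

variable (R : ℕ → ℕ → Prop) (n l : ℕ)

/-- The starting points of windows of length `l`: runs of `l` consecutive entries satisfying `R`
along a diagonal, other than the main one, of the `n × n` square. Unlike lines, windows need not be
maximal. -/
def windows : Set (ℕ × ℕ) :=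
  {p | p.1 + l ≤ n ∧ p.2 + l ≤ n ∧ p.1 ≠ p.2 ∧ ∀ h < l, R (p.1 + h) (p.2 + h)}

/-- The starting points of windows of length `l` that cannot be extended backwards. For `1 ≤ l`
these are the starting points of the diagonal lines of length at least `l`. -/
def lineStarts : Set (ℕ × ℕ) :=
  {p ∈ windows R n l | 0 < p.1 → 0 < p.2 → ¬ R (p.1 - 1) (p.2 - 1)}

/-- The pairs counted by the correlation sum `C_l`. The indices `p.1 + k` and `p.2 + k` may leave
the `n × n` square. -/
def corrPairs : Set (ℕ × ℕ) :=
  {p | p.1 < n ∧ p.2 < n ∧ ∀ k < l, R (p.1 + k) (p.2 + k)}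

variable {R n l} {i j : ℕ}

theorem mem_windows_succ_iff_last :
    (i, j) ∈ windows R n (l + 1) ↔
      (i, j) ∈ windows R n l ∧ max i j + l < n ∧ R (i + l) (j + l) := by
  simp only [windows, Set.mem_ofPred_eq, Nat.forall_lt_succ_right]
  grind

theorem mem_windows_succ_iff_first :
    (i, j) ∈ windows R n (l + 1) ↔ R i j ∧ (i + 1, j + 1) ∈ windows R n l := by
  simp only [windows, Set.mem_ofPred_eq, Nat.forall_lt_succ_left, add_zero, add_right_comm _ 1,
    ← add_assoc, add_left_inj, ne_eq]
  tauto

theorem windows_eq_empty (h : n ≤ l) : windows R n l = ∅ := by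
  rw [Set.eq_empty_iff_forall_notMem]
  rintro p ⟨h₁, h₂, hne, -⟩
  lia

theorem lineStarts_succ_subset : lineStarts R n (l + 1) ⊆ lineStarts R n l :=
  fun _ hp => ⟨(mem_windows_succ_iff_last.mp hp.1).1, hp.2⟩

theorem windows_sdiff_lineStarts :
    windows R n l \ lineStarts R n l = (· + 1) '' windows R n (l + 1) := by
  ext ⟨i, j⟩
  constructor
  · rintro ⟨hw, hs⟩
    obtain ⟨hi, hj, hR⟩ : 0 < i ∧ 0 < j ∧ R (i - 1) (j - 1) := by
      simpa [lineStarts, hw] using hs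
    obtain ⟨i, rfl⟩ := Nat.exists_eq_add_one.mpr hi
    obtain ⟨j, rfl⟩ := Nat.exists_eq_add_one.mpr hj
    exact ⟨(i, j), mem_windows_succ_iff_first.mpr ⟨hR, hw⟩, rfl⟩
  · rintro ⟨⟨i', j'⟩, hw, hij⟩
    obtain ⟨rfl, rfl⟩ := Prod.mk.inj hij
    obtain ⟨hR, hw⟩ := mem_windows_succ_iff_first.mp hw
    exact ⟨hw, fun hs => hs.2 (Nat.succ_pos _) (Nat.succ_pos _) hR⟩

variable (R n l)

theorem corrPairs_finite : (corrPairs R n l).Finite :=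
  ((Set.finite_Iio n).prod (Set.finite_Iio n)).subset fun _ hp => ⟨hp.1, hp.2.1⟩

theorem windows_finite : (windows R n l).Finite :=
  ((Set.finite_Iic n).prod (Set.finite_Iic n)).subset fun _ hp =>
    ⟨le_of_add_le_left hp.1, le_of_add_le_left hp.2.1⟩

theorem ncard_lineStarts_add_ncard_windows_succ :
    (lineStarts R n l).ncard + (windows R n (l + 1)).ncard = (windows R n l).ncard := by
  rw [← Set.ncard_image_of_injective (windows R n (l + 1)) (add_left_injective (1 : ℕ × ℕ)),
    ← windows_sdiff_lineStarts, add_comm]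
  exact Set.ncard_sdiff_add_ncard_of_subset (Set.sep_subset _ _) (windows_finite R n l)

variable {l} in
theorem windows_subset_corrPairs (hl : 1 ≤ l) : windows R n l ⊆ corrPairs R n l :=
  fun _ ⟨h₁, h₂, _, hR⟩ => ⟨by lia, by lia, hR⟩

theorem corrPairs_sdiff_windows_subset :
    corrPairs R n l \ windows R n l ⊆
      (fun i => (i, i)) '' Set.Iio n ∪
        (Set.Ico (n - l) n ×ˢ Set.Iio n ∪ Set.Iio n ×ˢ Set.Ico (n - l) n) := by
  rintro ⟨i, j⟩ ⟨⟨hi, hj, hR⟩, hw⟩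
  have border : i = j ∨ n < i + l ∨ n < j + l := by
    by_contra! h
    exact hw ⟨h.2.1, h.2.2, h.1, hR⟩
  simp only [Set.mem_union, Set.mem_image, Set.mem_prod, Set.mem_Ico, Set.mem_Iio,
    Prod.mk.injEq] at hi hj ⊢
  rcases border with rfl | border
  · exact Or.inl ⟨i, hi, rfl, rfl⟩
  · lia

theorem ncard_corrPairs_sdiff_windows_le :
    (corrPairs R n l \ windows R n l).ncard ≤ (2 * l + 1) * n := by
  have strip : (Set.Ico (n - l) n).ncard ≤ l := by
    rw [Set.ncard_Ico_nat]
    lia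
  have side : (Set.Iio n).ncard = n := Set.ncard_Iio_nat n
  calc (corrPairs R n l \ windows R n l).ncard
      ≤ _ := Set.ncard_le_ncard (corrPairs_sdiff_windows_subset R n l) (by toFinite_tac)
    _ ≤ (Set.Iio n).ncard + ((Set.Ico (n - l) n).ncard * (Set.Iio n).ncard +
          (Set.Iio n).ncard * (Set.Ico (n - l) n).ncard) := by
      grw [Set.ncard_union_le, Set.ncard_union_le, Set.ncard_image_le (Set.finite_Iio n),
        Set.ncard_prod, Set.ncard_prod]
    _ ≤ n + (l * n + n * l) := by
      rw [side]
      gcongr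
    _ = (2 * l + 1) * n := by ring

end Windows

section Quantifiers

variable {X : Type*} (d : X → X → ℝ) (f : X → X) (x : X) (ε : ℝ) (n : ℕ) {l : ℕ}

/-- The number of windows of length `l` in the recurrence plot `RP(x, n, ε)`, normalized by
`n² - n` as in `P_l`. -/
noncomputable def windowRate (l : ℕ) : ℝ :=
  (windows (RPone d f x ε) n l).ncard / ((n : ℝ) ^ 2 - n)

theorem setOf_isLine_eq_sdiff (hl : 1 ≤ l) :
    {p : ℕ × ℕ | IsLine d f x n ε p.1 p.2 l} =
      lineStarts (RPone d f x ε) n l \ lineStarts (RPone d f x ε) n (l + 1) := by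
  ext ⟨i, j⟩
  simp only [IsLine, lineStarts, Set.mem_sdiff, Set.mem_ofPred_eq, mem_windows_succ_iff_last]
  simp only [windows, Set.mem_ofPred_eq]
  tauto

theorem Nlines_eq_secondDiff (hl : 1 ≤ l) :
    (Nlines d f x n ε l : ℝ) = (windows (RPone d f x ε) n l).ncard -
      2 * (windows (RPone d f x ε) n (l + 1)).ncard +
        (windows (RPone d f x ε) n (l + 2)).ncard := by
  set R := RPone d f x ε
  have lines : Nlines d f x n ε l + (lineStarts R n (l + 1)).ncard = (lineStarts R n l).ncard := by
    rw [Nlines, setOf_isLine_eq_sdiff d f x ε n hl]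
    exact Set.ncard_sdiff_add_ncard_of_subset lineStarts_succ_subset
      ((windows_finite R n l).subset (Set.sep_subset _ _))
  have starts := ncard_lineStarts_add_ncard_windows_succ R n l
  have starts_succ := ncard_lineStarts_add_ncard_windows_succ R n (l + 1)
  rify at lines starts starts_succ
  linarith

theorem Pline_eq_secondDiff (hl : 1 ≤ l) :
    Pline d f x n ε l = windowRate d f x ε n l - 2 * windowRate d f x ε n (l + 1) +
      windowRate d f x ε n (l + 2) := by
  rw [Pline, Nlines_eq_secondDiff d f x ε n hl]
  simp only [windowRate]
  ring

theorem hasSum_affine_mul_Pline (hl : 1 ≤ l) (b c : ℝ) :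
    HasSum (fun k : ℕ => (c + b * k) * Pline d f x n ε (l + k))
      (c * (windowRate d f x ε n l - windowRate d f x ε n (l + 1)) +
        b * windowRate d f x ε n (l + 1)) := by
  have vanish (k : ℕ) (hk : n ≤ k) : windowRate d f x ε n (l + k) = 0 := by
    simp [windowRate, windows_eq_empty (le_add_left hk)]
  have second_diff (k : ℕ) := Pline_eq_secondDiff d f x ε n (l := l + k) (by lia)
  simp only [second_diff]
  exact hasSum_affine_mul_secondDiff vanish b c

theorem hasSum_Pline (hl : 1 ≤ l) :
    HasSum (fun k : ℕ => Pline d f x n ε (l + k))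
      (windowRate d f x ε n l - windowRate d f x ε n (l + 1)) := by
  simpa using hasSum_affine_mul_Pline d f x ε n hl 0 1

theorem PlineGe_eq_windowRate (hl : 1 ≤ l) :
    PlineGe d f x n ε l = windowRate d f x ε n l - windowRate d f x ε n (l + 1) :=
  (hasSum_Pline d f x ε n hl).tsum_eq

theorem RRate_eq_windowRate (hl : 1 ≤ l) :
    RRate d f x n ε l =
      l * windowRate d f x ε n l - (l - 1) * windowRate d f x ε n (l + 1) := by
  have weighted := (hasSum_affine_mul_Pline d f x ε n hl 1 l).tsum_eq
  simp only [one_mul, ← Nat.cast_add] at weighted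
  rw [RRate, weighted]
  ring

theorem Pline_nonneg (l : ℕ) : 0 ≤ Pline d f x n ε l := by
  have : (n : ℝ) ≤ (n : ℝ) ^ 2 := mod_cast Nat.le_self_pow two_ne_zero n
  exact div_nonneg (Nat.cast_nonneg _) (sub_nonneg.mpr this)

variable {d f x ε n} in
theorem PlineGe_pos_of_RRate_pos (hl : 1 ≤ l) (hRR : 0 < RRate d f x n ε l) :
    0 < PlineGe d f x n ε l := by
  have nonneg (k : ℕ) : 0 ≤ Pline d f x n ε (l + k) := Pline_nonneg d f x ε n (l + k)
  refine (tsum_nonneg nonneg).lt_of_ne fun hzero => hRR.ne' ?_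
  have lines_zero : (fun k => Pline d f x n ε (l + k)) = 0 :=
    (hasSum_zero_iff_of_nonneg nonneg).mp
      (hzero ▸ (hasSum_Pline d f x ε n hl).summable.hasSum)
  simp [RRate, fun k => congrFun lines_zero k]

theorem abs_corrSum_sub_windows_le (hl : 1 ≤ l) :
    |corrSum d f x l n ε - (windows (RPone d f x ε) n l).ncard / (n : ℝ) ^ 2| ≤
      (2 * l + 1) / n := by
  set R := RPone d f x ε
  have split : ((corrPairs R n l \ windows R n l).ncard : ℝ) + (windows R n l).ncard =
      (corrPairs R n l).ncard := mod_cast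
    Set.ncard_sdiff_add_ncard_of_subset (windows_subset_corrPairs R n hl) (corrPairs_finite R n l)
  have bound : ((corrPairs R n l \ windows R n l).ncard : ℝ) ≤ (2 * l + 1) * n :=
    mod_cast ncard_corrPairs_sdiff_windows_le R n l
  calc |corrSum d f x l n ε - (windows R n l).ncard / (n : ℝ) ^ 2|
      = |((corrPairs R n l).ncard : ℝ) / (n : ℝ) ^ 2 - (windows R n l).ncard / (n : ℝ) ^ 2| := rfl
    _ = (corrPairs R n l \ windows R n l).ncard / (n : ℝ) ^ 2 := by
      rw [← sub_div, ← split, add_sub_cancel_right, abs_of_nonneg (by positivity)]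
    _ ≤ (2 * l + 1) * n / (n : ℝ) ^ 2 := by gcongr
    _ = (2 * l + 1) / n := by field_simp

end Quantifiers

section Limits

theorem tendsto_sq_div_sq_sub_self :
    Tendsto (fun n : ℕ => (n : ℝ) ^ 2 / ((n : ℝ) ^ 2 - n)) atTop (𝓝 1) := by
  refine (tendsto_natCast_div_add_atTop (-1 : ℝ)).congr' ?_
  filter_upwards [eventually_ne_atTop 0] with n hn
  have : (n : ℝ) ≠ 0 := mod_cast hn
  rw [show (n : ℝ) ^ 2 - n = n * (n + -1) by ring, sq, mul_div_mul_left _ _ this]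

variable {X : Type*} {d : X → X → ℝ} {f : X → X} {x : X} {ε : ℝ} {l : ℕ} {C C' : ℝ}

theorem tendsto_windowRate (hl : 1 ≤ l)
    (hC : Tendsto (fun n : ℕ => corrSum d f x l n ε) atTop (𝓝 C)) :
    Tendsto (fun n : ℕ => windowRate d f x ε n l) atTop (𝓝 C) := by
  have close : Tendsto (fun n : ℕ => dist (corrSum d f x l n ε)
      ((windows (RPone d f x ε) n l).ncard / (n : ℝ) ^ 2)) atTop (𝓝 0) :=
    squeeze_zero (fun _ => dist_nonneg) (fun n => abs_corrSum_sub_windows_le d f x ε n hl)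
      (tendsto_const_div_atTop_nhds_zero_nat _)
  have limit := (hC.congr_dist close).mul tendsto_sq_div_sq_sub_self
  rw [mul_one] at limit
  refine limit.congr' ?_
  filter_upwards [eventually_ne_atTop 0] with n hn
  have : (n : ℝ) ^ 2 ≠ 0 := by positivity
  exact div_mul_div_cancel₀ this

theorem tendsto_PlineGe (hl : 1 ≤ l)
    (hC : Tendsto (fun n : ℕ => corrSum d f x l n ε) atTop (𝓝 C))
    (hC' : Tendsto (fun n : ℕ => corrSum d f x (l + 1) n ε) atTop (𝓝 C')) :
    Tendsto (fun n : ℕ => PlineGe d f x n ε l) atTop (𝓝 (C - C')) := by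
  simp only [PlineGe_eq_windowRate d f x ε _ hl]
  exact (tendsto_windowRate hl hC).sub (tendsto_windowRate (by lia) hC')

theorem tendsto_RRate (hl : 1 ≤ l)
    (hC : Tendsto (fun n : ℕ => corrSum d f x l n ε) atTop (𝓝 C))
    (hC' : Tendsto (fun n : ℕ => corrSum d f x (l + 1) n ε) atTop (𝓝 C')) :
    Tendsto (fun n : ℕ => RRate d f x n ε l) atTop (𝓝 (l * C - (l - 1) * C')) := by
  simp only [RRate_eq_windowRate d f x ε _ hl]
  exact ((tendsto_windowRate hl hC).const_mul _).sub
    ((tendsto_windowRate (by lia) hC').const_mul _)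

theorem tendsto_RRate_one (hC : Tendsto (fun n : ℕ => corrSum d f x 1 n ε) atTop (𝓝 C)) :
    Tendsto (fun n : ℕ => RRate d f x n ε 1) atTop (𝓝 C) := by
  simpa [RRate_eq_windowRate d f x ε _ le_rfl] using tendsto_windowRate le_rfl hC

theorem tendsto_LAvg (hl : 1 ≤ l)
    (hC : Tendsto (fun n : ℕ => corrSum d f x l n ε) atTop (𝓝 C))
    (hC' : Tendsto (fun n : ℕ => corrSum d f x (l + 1) n ε) atTop (𝓝 C')) (hne : C - C' ≠ 0) :
    Tendsto (fun n : ℕ => LAvg d f x n ε l) atTop (𝓝 (l + C' / (C - C'))) := by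
  have limit_eq : (l * C - (l - 1) * C') / (C - C') = l + C' / (C - C') := by
    field_simp
    ring
  exact limit_eq ▸ (tendsto_RRate hl hC hC').div (tendsto_PlineGe hl hC hC') hne

theorem tendsto_LAvg_atTop (hl : 1 ≤ l) (hpos : 0 < C)
    (hC : Tendsto (fun n : ℕ => corrSum d f x l n ε) atTop (𝓝 C))
    (hC' : Tendsto (fun n : ℕ => corrSum d f x (l + 1) n ε) atTop (𝓝 C)) :
    Tendsto (fun n : ℕ => LAvg d f x n ε l) atTop atTop := by
  have hRR : Tendsto (fun n : ℕ => RRate d f x n ε l) atTop (𝓝 C) := by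
    simpa [sub_mul] using tendsto_RRate hl hC hC'
  have hP : Tendsto (fun n : ℕ => PlineGe d f x n ε l) atTop (𝓝[>] 0) := by
    refine tendsto_nhdsWithin_iff.mpr ⟨by simpa using tendsto_PlineGe hl hC hC', ?_⟩
    exact (hRR.eventually_const_lt hpos).mono fun n => PlineGe_pos_of_RRate_pos hl
  exact hRR.pos_mul_atTop hpos hP.inv_tendsto_nhdsGT_zero

end Limits

end RQA

theorem asymptotic_quantifiers_via_corrSum_general
    {X : Type*} (d : X → X → ℝ) (f : X → X) (x : X)
    (ℓ : ℕ) (hℓ : 1 ≤ ℓ) (ε : ℝ) (C1 Cl Cl1 : ℝ)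
    (hC1 : Tendsto (fun n : ℕ => corrSum d f x 1 n ε) atTop (𝓝 C1))
    (hCl : Tendsto (fun n : ℕ => corrSum d f x ℓ n ε) atTop (𝓝 Cl))
    (hCl1 : Tendsto (fun n : ℕ => corrSum d f x (ℓ + 1) n ε) atTop (𝓝 Cl1)) :
    Tendsto (fun n : ℕ => RRate d f x n ε ℓ) atTop
      (𝓝 ((ℓ : ℝ) * Cl - ((ℓ : ℝ) - 1) * Cl1)) ∧
    (∃ Pg : ℝ, Tendsto (fun n : ℕ => PlineGe d f x n ε ℓ) atTop (𝓝 Pg) ∧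
      Cl = ((ℓ : ℝ) * Cl - ((ℓ : ℝ) - 1) * Cl1) - ((ℓ : ℝ) - 1) * Pg) ∧
    (0 < C1 →
      Tendsto (fun n : ℕ => DETrm d f x n ε ℓ) atTop
        (𝓝 (((ℓ : ℝ) * Cl - ((ℓ : ℝ) - 1) * Cl1) / C1))) ∧
    (0 < Cl →
      (Cl - Cl1 ≠ 0 →
        Tendsto (fun n : ℕ => LAvg d f x n ε ℓ) atTop
          (𝓝 ((ℓ : ℝ) + Cl1 / (Cl - Cl1)))) ∧
      (Cl - Cl1 = 0 →
        Tendsto (fun n : ℕ => LAvg d f x n ε ℓ) atTop atTop)) := by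
  have hRR := tendsto_RRate hℓ hCl hCl1
  refine ⟨hRR, ⟨Cl - Cl1, tendsto_PlineGe hℓ hCl hCl1, by ring⟩,
    fun hpos => hRR.div (tendsto_RRate_one hC1) hpos.ne',
    fun hpos => ⟨tendsto_LAvg hℓ hCl hCl1, fun hzero => ?_⟩⟩
  obtain rfl : Cl = Cl1 := sub_eq_zero.mp hzero
  exact tendsto_LAvg_atTop hℓ hpos hCl hCl1

/-- Asymptotic recurrence quantifiers via correlation sums:
if C_1(x,∞,ε), C_ℓ(x,∞,ε), C_{ℓ+1}(x,∞,ε) exist, then RR_ℓ(x,∞,ε) and P≥_ℓ(x,∞,ε)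
exist, RR_ℓ(∞) = ℓC_ℓ − (ℓ−1)C_{ℓ+1}, DET_ℓ(∞) = [ℓC_ℓ − (ℓ−1)C_{ℓ+1}]/C_1,
L_ℓ(∞) = ℓ + C_{ℓ+1}/(C_ℓ − C_{ℓ+1}) when C_ℓ > 0 (L_ℓ(∞) = ∞ if the denominator
vanishes), and C_ℓ = RR_ℓ(∞) − (ℓ−1)·P≥_ℓ(∞). -/
theorem asymptotic_quantifiers_via_corrSum
    {X : Type*} [MetricSpace X] (f : X → X) (x : X)
    (ℓ : ℕ) (hℓ : 1 ≤ ℓ) (ε : ℝ) (hε : 0 < ε) (C1 Cl Cl1 : ℝ)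
    (hC1 : Tendsto (fun n : ℕ => corrSum dist f x 1 n ε) atTop (𝓝 C1))
    (hCl : Tendsto (fun n : ℕ => corrSum dist f x ℓ n ε) atTop (𝓝 Cl))
    (hCl1 : Tendsto (fun n : ℕ => corrSum dist f x (ℓ + 1) n ε) atTop (𝓝 Cl1)) :
    Tendsto (fun n : ℕ => RRate dist f x n ε ℓ) atTop
      (𝓝 ((ℓ : ℝ) * Cl - ((ℓ : ℝ) - 1) * Cl1)) ∧
    (∃ Pg : ℝ, Tendsto (fun n : ℕ => PlineGe dist f x n ε ℓ) atTop (𝓝 Pg) ∧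
      Cl = ((ℓ : ℝ) * Cl - ((ℓ : ℝ) - 1) * Cl1) - ((ℓ : ℝ) - 1) * Pg) ∧
    (0 < C1 →
      Tendsto (fun n : ℕ => DETrm dist f x n ε ℓ) atTop
        (𝓝 (((ℓ : ℝ) * Cl - ((ℓ : ℝ) - 1) * Cl1) / C1))) ∧
    (0 < Cl →
      (Cl - Cl1 ≠ 0 →
        Tendsto (fun n : ℕ => LAvg dist f x n ε ℓ) atTop
          (𝓝 ((ℓ : ℝ) + Cl1 / (Cl - Cl1)))) ∧
      (Cl - Cl1 = 0 →
        Tendsto (fun n : ℕ => LAvg dist f x n ε ℓ) atTop atTop)) :=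
  asymptotic_quantifiers_via_corrSum_general dist f x ℓ hℓ ε C1 Cl Cl1 hC1 hCl hCl1
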